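/- Let q > 1 be real, a ≥ 1 and h ≥ 0, and set C = (q−1)/q + 2/(q^h(q^{a−1/2}−1)) + 1/q^{h+1}. Then for every real λ > 0, λ·∫_{−∞}^{∞} (q^{−t} − q^{−(t+1)})·exp(−(λ/q^t)·C) dt = (1/ln q)·((q−1)/q)·(1/C). Consequently the scale-invariance constant of the Curtain sketch with parameters (q,a,h) is κ_Curtain = ((q−1)/(q ln q))·(1/((q−1)/q + 2/(q^h(q^{a−1/2}−1)) + 1/q^{h+1})). -/

import Mathlib

/-!
Since `q ^ (-t) - q ^ (-(t + 1)) = (q - 1) / q * q ^ (-t)`, the integrand is a function of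
`y = q ^ (-t)` times `y`, and `dy / y = -log q dt`. The substitution therefore turns the integral
over the line into `(q - 1) / (q log q) * ∫ y in (0, ∞), exp (-λ C y)`, whose value
`1 / (λ C)` cancels the prefactor `λ`.
-/

open MeasureTheory Set

section RpowSubstitution

variable {E : Type*} [NormedAddCommGroup E] [NormedSpace ℝ E]

theorem integral_exp_smul_comp_exp (f : ℝ → E) :
    ∫ x, Real.exp x • f (Real.exp x) = ∫ y in Ioi 0, f y := by
  rw [← Real.range_exp, ← image_univ, integral_image_eq_integral_deriv_smul_of_monotoneOn
    MeasurableSet.univ (fun x _ ↦ (Real.hasDerivAt_exp x).hasDerivWithinAt)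
    (Real.exp_monotone.monotoneOn univ), setIntegral_univ]

-- For `b = 1` the left side integrates a constant over `ℝ` and `0⁻¹ = 0`, so both sides vanish.
theorem integral_rpow_smul_comp_rpow {b : ℝ} (hb : 0 < b) (f : ℝ → E) :
    ∫ t : ℝ, b ^ t • f (b ^ t) = |Real.log b|⁻¹ • ∫ y in Ioi 0, f y := by
  simp_rw [Real.rpow_def_of_pos hb]
  rw [Measure.integral_comp_mul_left (fun x ↦ Real.exp x • f (Real.exp x)),
    integral_exp_smul_comp_exp, abs_inv]

theorem integral_rpow_neg_smul_comp_rpow_neg {b : ℝ} (hb : 0 < b) (f : ℝ → E) :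
    ∫ t : ℝ, b ^ (-t) • f (b ^ (-t)) = |Real.log b|⁻¹ • ∫ y in Ioi 0, f y := by
  rw [integral_neg_eq_self (fun t ↦ b ^ t • f (b ^ t)), integral_rpow_smul_comp_rpow hb]

end RpowSubstitution

theorem integral_rpow_neg_mul_exp_neg_mul_rpow_neg {b c : ℝ} (hb : 0 < b) (hc : 0 < c) :
    ∫ t : ℝ, b ^ (-t) * Real.exp (-c * b ^ (-t)) = |Real.log b|⁻¹ * c⁻¹ := by
  have exp_integral : ∫ y in Ioi 0, Real.exp (-c * y) = c⁻¹ := by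
    rw [integral_exp_mul_Ioi (neg_lt_zero.mpr hc), mul_zero, Real.exp_zero, neg_div_neg_eq,
      one_div]
  rw [← exp_integral]
  exact integral_rpow_neg_smul_comp_rpow_neg hb fun y ↦ Real.exp (-c * y)

theorem rpow_neg_sub_rpow_neg_add_one {b : ℝ} (hb : b ≠ 0) (t : ℝ) :
    b ^ (-t) - b ^ (-(t + 1)) = (b - 1) / b * b ^ (-t) := by
  rw [neg_add', Real.rpow_sub_one hb]
  field_simp

theorem stmt_14_general {q C lam : ℝ} (hq : 1 < q) (hC : 0 < C) (hlam : 0 < lam) :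
    lam * ∫ t : ℝ, (q ^ (-t) - q ^ (-(t + 1))) * Real.exp (-((lam / q ^ t) * C))
      = (1 / Real.log q) * ((q - 1) / q) * (1 / C) := by
  have hq0 : 0 < q := one_pos.trans hq
  have integrand_eq (t : ℝ) :
      (q ^ (-t) - q ^ (-(t + 1))) * Real.exp (-((lam / q ^ t) * C))
        = (q - 1) / q * (q ^ (-t) * Real.exp (-(lam * C) * q ^ (-t))) := by
    rw [rpow_neg_sub_rpow_neg_add_one hq0.ne', mul_assoc, Real.rpow_neg hq0.le]
    ring_nf
  simp_rw [integrand_eq]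
  rw [integral_const_mul, integral_rpow_neg_mul_exp_neg_mul_rpow_neg hq0 (mul_pos hlam hC),
    abs_of_pos (Real.log_pos hq)]
  field_simp

/-- The constant `C` of the Curtain sketch with parameters `(q, a, h)`: cell `t` is free with
probability `exp (-(λ / q ^ t) * C)`. The parameters `a` and `h` are taken real. -/
noncomputable def curtainConst (q a h : ℝ) : ℝ :=
  (q - 1) / q + 2 / (q ^ h * (q ^ (a - 1/2) - 1)) + 1 / q ^ (h + 1)

theorem curtainConst_pos {q a : ℝ} (hq : 1 < q) (ha : 1 / 2 < a) (h : ℝ) :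
    0 < curtainConst q a h := by
  have : 0 < q := one_pos.trans hq
  have : 0 < q - 1 := sub_pos.mpr hq
  have : 0 < q ^ (a - 1/2) - 1 :=
    sub_pos.mpr (Real.one_lt_rpow hq (sub_pos.mpr ha))
  unfold curtainConst
  positivity

/-- For `q > 1`, `a ≥ 1`, `h ≥ 0`, and `C = (q−1)/q + 2/(q^h(q^{a−1/2}−1)) + 1/q^{h+1}`:
`λ·∫_{−∞}^{∞} (q^{−t} − q^{−(t+1)})·exp(−(λ/q^t)·C) dt = (1/ln q)·((q−1)/q)·(1/C)`,
i.e. the scale-invariance constant of the Curtain sketch with parameters `(q,a,h)` is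
`κ = ((q−1)/(q ln q))·(1/C)`. -/
theorem stmt_14 (q a h lam : ℝ) (hq : 1 < q) (ha : 1 ≤ a) (hh : 0 ≤ h) (hlam : 0 < lam) :
    lam * ∫ t : ℝ,
        (q ^ (-t) - q ^ (-(t + 1))) *
          Real.exp (-((lam / q ^ t) *
            ((q - 1) / q + 2 / (q ^ h * (q ^ (a - 1/2) - 1)) + 1 / q ^ (h + 1))))
      = (1 / Real.log q) * ((q - 1) / q) *
          (1 / ((q - 1) / q + 2 / (q ^ h * (q ^ (a - 1/2) - 1)) + 1 / q ^ (h + 1))) :=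
  stmt_14_general hq (curtainConst_pos hq (by linarith) h) hlam
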